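/- Let 3 ≤ q ≤ m be integers and γ ∈ ℝ. Let K : ℝ^q → ℝ be a location-scale invariant kernel and K_m(x_1,…,x_m) = K(x_{m:m},…,x_{m−q+1:m}). If Z*_1,…,Z*_m are independent standard GP(γ) random variables, then (Z*_{m−q+1:m}, K_m(Z*_1,…,Z*_m)) =_d (Z*_{m−q+1:m}, K((Z_{q−i:q−1})_{i=1}^{q})), where Z_1,…,Z_{q−1} is another independent standard GP(γ) sample independent of the Z*'s and Z_{0:q−1} := 0. In particular, K_m(Z*_1,…,Z*_m) is independent of Z*_{m−q+1:m} and its distribution does not depend on m. -/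

import Mathlib

open MeasureTheory ProbabilityTheory Filter Real Set Topology
open scoped ENNReal NNReal Classical

noncomputable section

/-- The `j`-th largest entry of the tuple `x` (`j = 0` gives the maximum, `j = 1` the
second largest, ...); `0` when `j` is out of range. -/
def descStat {m : ℕ} (x : Fin m → ℝ) (j : ℕ) : ℝ :=
  if h : j < m then (x ∘ Tuple.sort x) ⟨m - 1 - j, by omega⟩ else 0

/-- The kernel of degree `m` obtained from `K` by applying it to the top-`q`
(descending) order statistics: `K_m(x_1,…,x_m) = K(x_{m:m},…,x_{m−q+1:m})`. -/
def Km {q : ℕ} (K : (Fin q → ℝ) → ℝ) (m : ℕ) (x : Fin m → ℝ) : ℝ :=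
  K fun j => descStat x (j : ℕ)

/-- `K(a x_1 + b, …, a x_q + b) = K(x_1, …, x_q)` for all `a > 0`, `b ∈ ℝ`. -/
def LocScaleInvariant {q : ℕ} (K : (Fin q → ℝ) → ℝ) : Prop :=
  ∀ a b : ℝ, 0 < a → ∀ x : Fin q → ℝ, K (fun j => a * x j + b) = K x

/-- `h_γ(y) = (y^γ - 1)/γ`, interpreted as `log y` when `γ = 0`. -/
def hGamma (γ : ℝ) (y : ℝ) : ℝ := if γ = 0 then Real.log y else (y ^ γ - 1) / γ

lemma measurable_hGamma (γ : ℝ) : Measurable (hGamma γ) := by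
  unfold hGamma
  split_ifs
  · exact Real.measurable_log
  · fun_prop

/-- The uniform distribution on `(0,1)`. -/
def unif01 : Measure ℝ := volume.restrict (Set.Ioo (0:ℝ) 1)

instance : IsProbabilityMeasure unif01 := ⟨by simp [unif01]⟩

/-- The standard Pareto(1) distribution, with cdf `1 - 1/y` for `y ≥ 1`. -/
def pareto1 : Measure ℝ := ProbabilityTheory.paretoMeasure 1 1

instance : IsProbabilityMeasure pareto1 :=
  ProbabilityTheory.isProbabilityMeasure_paretoMeasure one_pos one_pos

/-- The standard generalized Pareto distribution `GP(γ)`: the law of `h_γ(Y)` for `Y`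
standard Pareto(1). -/
def gpMeasure (γ : ℝ) : Measure ℝ := pareto1.map (hGamma γ)

instance (γ : ℝ) : IsProbabilityMeasure (gpMeasure γ) :=
  Measure.isProbabilityMeasure_map (measurable_hGamma γ).aemeasurable

/-- The unit exponential distribution: the law of `-log U` for `U` uniform on `(0,1)`. -/
def expMeasure1 : Measure ℝ := unif01.map fun u => -Real.log u

instance : IsProbabilityMeasure expMeasure1 :=
  Measure.isProbabilityMeasure_map Real.measurable_log.neg.aemeasurable

/-- The Erlang(q) distribution: the law of the sum of `q` independent unit exponentials. -/
def erlangMeasure (q : ℕ) : Measure ℝ :=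
  (Measure.pi fun _ : Fin q => expMeasure1).map fun e => ∑ i, e i

instance (q : ℕ) : IsProbabilityMeasure (erlangMeasure q) :=
  Measure.isProbabilityMeasure_map
    (Finset.measurable_sum _ fun i _ => measurable_pi_apply i).aemeasurable

/-- The joint law of `r` iid `GP(γ)` random variables. -/
def gpPi (γ : ℝ) (r : ℕ) : Measure (Fin r → ℝ) := Measure.pi fun _ => gpMeasure γ

instance (γ : ℝ) (r : ℕ) : IsProbabilityMeasure (gpPi γ r) := by
  unfold gpPi; infer_instance

/-- The vector `(Z_{q-j:q-1})_{j=1}^{q}`: the descending order statistics of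
`z_1,…,z_{q-1}` with an extra last entry `Z_{0:q-1} := 0`. -/
def refVec {q : ℕ} (z : Fin (q-1) → ℝ) : Fin q → ℝ := fun j => descStat z (j : ℕ)

/-- `θ = E[K((Z_{q-j:q-1})_{j=1}^{q})]` for iid `GP(γ)` variables `Z_1,…,Z_{q-1}`. -/
def thetaK (γ : ℝ) {q : ℕ} (K : (Fin q → ℝ) → ℝ) : ℝ :=
  ∫ z, K (refVec z) ∂(gpPi γ (q-1))

/-- all moments of `K((Z_{q-j:q-1})_{j=1}^{q})` are finite. -/
def MomentCond (γ : ℝ) {q : ℕ} (K : (Fin q → ℝ) → ℝ) : Prop :=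
  ∀ p : ℝ, 0 < p →
    ∫⁻ z, ENNReal.ofReal (|K (refVec z)| ^ p) ∂(gpPi γ (q-1)) < ⊤

/-- The asymptotic variance
`σ²_K(γ) = ∫_0^∞ (E[K̄_{q+1}((Z_{q-j:q-1})_{j=1}^q, h_γ(S_q/x))])² dx`. -/
def sigmaSqK (γ : ℝ) {q : ℕ} (K : (Fin q → ℝ) → ℝ) : ℝ :=
  ∫ x in Set.Ioi (0:ℝ),
    (∫ zs : (Fin (q-1) → ℝ) × ℝ,
        (Km K (q+1) (Fin.snoc (refVec zs.1) (hGamma γ (zs.2 / x))) - thetaK γ K)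
      ∂((gpPi γ (q-1)).prod (erlangMeasure q))) ^ 2

/-- The U-statistic with kernel `K_m` evaluated on the sample `z`. -/
def UStat {q : ℕ} (K : (Fin q → ℝ) → ℝ) (m n : ℕ) (z : Fin n → ℝ) : ℝ :=
  ((n.choose m : ℝ))⁻¹ *
    ∑ I ∈ Finset.powersetCard m (Finset.univ : Finset (Fin n)),
      Km K I.card fun j => z (I.orderIsoOfFin rfl j).1

/-- Condition on the degree sequence: `m = o(n^{1-ε})` and `log n = o(m^{1-δ})`. -/
def DegreeCond (m : ℕ → ℕ) : Prop :=
  ∃ ε > (0:ℝ), ∃ δ > (0:ℝ),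
    Tendsto (fun n => (m n : ℝ) / (n : ℝ) ^ (1 - ε)) atTop (𝓝 0) ∧
    Tendsto (fun n : ℕ => Real.log n / (m n : ℝ) ^ (1 - δ)) atTop (𝓝 0)

/-- `ζ_{m,ℓ} = cov(K_m(Z_S), K_m(Z_{S'}))` for the blocks `S = [1:m]`,
`S' = [(m-ℓ+1):(2m-ℓ)]` (zero-indexed here), which overlap in `ℓ` indices. -/
def zetaCov {Ω : Type*} [MeasurableSpace Ω] (P : Measure Ω) {q : ℕ}
    (K : (Fin q → ℝ) → ℝ) (Z : ℕ → Ω → ℝ) (m ℓ : ℕ) : ℝ :=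
  (∫ ω, Km K m (fun i : Fin m => Z i ω) * Km K m (fun i : Fin m => Z (m - ℓ + i) ω) ∂P)
    - (∫ ω, Km K m (fun i : Fin m => Z i ω) ∂P)
      * (∫ ω, Km K m (fun i : Fin m => Z (m - ℓ + i) ω) ∂P)

/-- Convergence in distribution to a Gaussian, expressed via pointwise convergence of
the cumulative distribution functions (the Gaussian cdf being continuous). -/
def TendstoGaussian {Ω : Type*} [MeasurableSpace Ω] (P : Measure Ω)
    (T : ℕ → Ω → ℝ) (μ : ℝ) (v : ℝ≥0) : Prop :=
  ∀ x : ℝ, Tendsto (fun n => (P {ω | T n ω ≤ x}).toReal) atTop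
    (𝓝 ((gaussianReal μ v (Set.Iic x)).toReal))

/-- Convergence in probability to the constant `c`. -/
def TendstoInProb {Ω : Type*} [MeasurableSpace Ω] (P : Measure Ω)
    (T : ℕ → Ω → ℝ) (c : ℝ) : Prop :=
  ∀ ε : ℝ, 0 < ε → Tendsto (fun n => (P {ω | ε ≤ |T n ω - c|}).toReal) atTop (𝓝 0)

/-!
Almost surely an iid sample from an atomless law has distinct entries, so the probability of a
permutation-invariant event is `n!` times that of its part in the cone of increasing samples. There
the sample splits into its `p + 1` lowest entries and its `r = q - 1` highest ones, and the only
interaction is that the highest entries exceed the threshold `t`, the last of the lowest ones.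

Given `t`, the highest entries are iid from the law conditioned to exceed `t`. For a generalized
Pareto law this is the law of `σ z + t` with `z` a fresh observation and `σ > 0` depending on `t`:
the Pareto law has the multiplicative version of this property, and the identity
`h_γ(s y) = s^γ h_γ(y) + h_γ(s)` makes it affine. A location-scale invariant kernel sees neither
`σ` nor `t`, except that the threshold itself becomes the extra entry `0` of the reference sample.
Hence the joint law of threshold and kernel value is a product.
-/

section Tuples

variable {α : Type*} {p r : ℕ}

lemma castAdd_lt_natAdd {m n : ℕ} (i : Fin m) (j : Fin n) : Fin.castAdd n i < Fin.natAdd m j :=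
  Nat.lt_add_right _ i.isLt

lemma strictMono_append_iff [Preorder α] {y : Fin (p + 1) → α} {z : Fin r → α} :
    StrictMono (Fin.append y z) ↔
      StrictMono y ∧ StrictMono z ∧ ∀ j, y (Fin.last p) < z j := by
  constructor
  · intro h
    refine ⟨fun i j hij => ?_, fun i j hij => ?_, fun j => ?_⟩
    · simpa using h ((Fin.strictMono_castAdd r) hij)
    · simpa using h ((Fin.strictMono_natAdd (p + 1)) hij)
    · simpa using h (castAdd_lt_natAdd (Fin.last p) j)
  · rintro ⟨hy, hz, hyz⟩ i j
    refine Fin.addCases (fun i => ?_) (fun i => ?_) i <;>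
      refine Fin.addCases (fun j => ?_) (fun j => ?_) j <;> intro hij
    · simpa using hy ((Fin.strictMono_castAdd r).lt_iff_lt.1 hij)
    · simpa using (hy.monotone (Fin.le_last i)).trans_lt (hyz j)
    · exact absurd hij (castAdd_lt_natAdd j i).not_gt
    · simpa using hz ((Fin.strictMono_natAdd (p + 1)).lt_iff_lt.1 hij)

lemma strictMono_affine_iff {ι : Type*} [Preorder ι] [Field α] [LinearOrder α]
    [IsStrictOrderedRing α] {σ : α} (hσ : 0 < σ) (t : α) {z : ι → α} :
    StrictMono (fun i => σ * z i + t) ↔ StrictMono z := by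
  simp only [StrictMono, add_lt_add_iff_right, mul_lt_mul_iff_right₀ hσ]

lemma measurableSet_strictMono {ι : Type*} [Countable ι] [Preorder ι] [LinearOrder α]
    [TopologicalSpace α] [OrderClosedTopology α] [SecondCountableTopology α]
    [MeasurableSpace α] [OpensMeasurableSpace α] :
    MeasurableSet {x : ι → α | StrictMono x} := by
  simp only [StrictMono, ofPred_forall]
  exact .iInter fun i => .iInter fun j => .iInter fun _ =>
    measurableSet_lt (measurable_pi_apply i) (measurable_pi_apply j)

end Tuples

section OrderStatistics

variable {n : ℕ}

lemma descStat_of_le (x : Fin n → ℝ) {j : ℕ} (hj : n ≤ j) : descStat x j = 0 :=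
  dif_neg hj.not_gt

lemma descStat_of_monotone {x : Fin n → ℝ} (hx : Monotone x) {j : ℕ} (hj : j < n) :
    descStat x j = x (Fin.rev ⟨j, hj⟩) := by
  rw [descStat, dif_pos hj, Tuple.sort_eq_refl_iff_monotone.2 hx]
  exact congrArg x (Fin.ext (by simp only [Equiv.refl_apply, Fin.val_rev]; omega))

lemma descStat_comp_perm (x : Fin n → ℝ) (σ : Equiv.Perm (Fin n)) (j : ℕ) :
    descStat (x ∘ σ) j = descStat x j := by
  simp only [descStat, Tuple.comp_perm_comp_sort_eq_comp_sort]

lemma descStat_comp_monotone {f : ℝ → ℝ} (hf : Monotone f) (x : Fin n → ℝ) {j : ℕ} (hj : j < n) :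
    descStat (f ∘ x) j = f (descStat x j) := by
  have hx : Monotone (x ∘ Tuple.sort x) := Tuple.monotone_sort x
  rw [← descStat_comp_perm x (Tuple.sort x), ← descStat_comp_perm (f ∘ x) (Tuple.sort x),
    descStat_of_monotone hx hj, Function.comp_assoc, descStat_of_monotone (hf.comp hx) hj]
  rfl

lemma measurable_descStat (j : ℕ) : Measurable fun x : Fin n → ℝ => descStat x j := by
  by_cases hj : j < n
  swap
  · simpa only [descStat_of_le _ (not_lt.1 hj)] using measurable_const
  have hmono (σ : Equiv.Perm (Fin n)) : MeasurableSet {x : Fin n → ℝ | Monotone (x ∘ σ)} :=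
    (by fun_prop : Measurable fun x : Fin n → ℝ => x ∘ σ) isClosed_monotone.measurableSet
  intro s hs
  suffices (fun x : Fin n → ℝ => descStat x j) ⁻¹' s =
      ⋃ σ : Equiv.Perm (Fin n), {x | Monotone (x ∘ σ)} ∩ {x | x (σ (Fin.rev ⟨j, hj⟩)) ∈ s} by
    rw [this]
    exact .iUnion fun σ => (hmono σ).inter (measurable_pi_apply _ hs)
  ext x
  simp only [mem_preimage, mem_iUnion, mem_inter_iff, mem_ofPred_eq]
  have hval (σ : Equiv.Perm (Fin n)) (hσ : Monotone (x ∘ σ)) :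
      descStat x j = x (σ (Fin.rev ⟨j, hj⟩)) := by
    rw [← descStat_comp_perm x σ, descStat_of_monotone hσ hj, Function.comp_apply]
  constructor
  · intro hx
    exact ⟨Tuple.sort x, Tuple.monotone_sort x, hval _ (Tuple.monotone_sort x) ▸ hx⟩
  · rintro ⟨σ, hσ, hx⟩
    rwa [hval σ hσ]

variable {p r : ℕ} {y : Fin (p + 1) → ℝ} {z : Fin r → ℝ}

lemma descStat_append_of_lt (h : StrictMono (Fin.append y z)) {j : ℕ} (hj : j < r) :
    descStat (Fin.append y z) j = descStat z j := by
  rw [descStat_of_monotone h.monotone (by omega),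
    descStat_of_monotone (strictMono_append_iff.1 h).2.1.monotone hj,
    ← Fin.append_right y z (Fin.rev ⟨j, hj⟩)]
  exact congrArg _ (Fin.ext (by simp only [Fin.val_rev, Fin.val_natAdd]; omega))

lemma descStat_append_self (h : StrictMono (Fin.append y z)) :
    descStat (Fin.append y z) r = y (Fin.last p) := by
  rw [descStat_of_monotone h.monotone (by omega), ← Fin.append_left y z (Fin.last p)]
  exact congrArg _ (Fin.ext (by simp only [Fin.val_rev, Fin.val_castAdd, Fin.val_last]; omega))

/-- The descending order statistics of `z` followed by a threshold `t`: the arguments fed to a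
kernel of order `r + 1` when `z` lists the observations exceeding `t`. The threshold `0` gives
`refVec z`. -/
def descSnoc (z : Fin r → ℝ) (t : ℝ) : Fin (r + 1) → ℝ :=
  Fin.snoc (fun j : Fin r => descStat z j) t

lemma measurable_descSnoc (t : ℝ) : Measurable fun z : Fin r → ℝ => descSnoc z t := by
  refine measurable_pi_iff.2 (Fin.lastCases ?_ fun j => ?_)
  · simp only [descSnoc, Fin.snoc_last, measurable_const]
  · simpa only [descSnoc, Fin.snoc_castSucc] using measurable_descStat j

lemma descSnoc_affine {σ : ℝ} (hσ : 0 ≤ σ) (z : Fin r → ℝ) (t : ℝ) :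
    descSnoc (fun i => σ * z i + t) t = fun j : Fin (r + 1) => σ * descStat z j + t := by
  have hmono : Monotone fun u : ℝ => σ * u + t := fun u v huv => by dsimp only; gcongr
  funext j
  refine Fin.lastCases ?_ (fun j => ?_) j
  · simp only [descSnoc, Fin.snoc_last, Fin.val_last, descStat_of_le z le_rfl, mul_zero, zero_add]
  · simp only [descSnoc, Fin.snoc_castSucc, Fin.val_castSucc]
    exact descStat_comp_monotone hmono z j.isLt

end OrderStatistics

section Kernel

variable {q n p r : ℕ}

lemma Km_comp_perm (K : (Fin q → ℝ) → ℝ) (x : Fin n → ℝ) (σ : Equiv.Perm (Fin n)) :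
    Km K n (x ∘ σ) = Km K n x := by
  simp only [Km, descStat_comp_perm]

lemma measurable_Km {K : (Fin q → ℝ) → ℝ} (hK : Measurable K) : Measurable (Km K n) :=
  hK.comp (measurable_pi_iff.2 fun j => measurable_descStat j)

lemma measurableSet_descStat_Km (n j : ℕ) {K : (Fin q → ℝ) → ℝ} (hK : Measurable K) {A B : Set ℝ}
    (hA : MeasurableSet A) (hB : MeasurableSet B) :
    MeasurableSet {x : Fin n → ℝ | descStat x j ∈ A ∧ Km K n x ∈ B} :=
  (measurable_descStat j hA).inter (measurable_Km hK hB)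

lemma Km_append (K : (Fin (r + 1) → ℝ) → ℝ) {y : Fin (p + 1) → ℝ} {z : Fin r → ℝ}
    (h : StrictMono (Fin.append y z)) :
    Km K (p + 1 + r) (Fin.append y z) = K (descSnoc z (y (Fin.last p))) := by
  refine congrArg K (funext (Fin.lastCases ?_ fun j => ?_))
  · simp only [descSnoc, Fin.snoc_last, Fin.val_last, descStat_append_self h]
  · simp only [descSnoc, Fin.snoc_castSucc, Fin.val_castSucc, descStat_append_of_lt h j.isLt]

lemma LocScaleInvariant.apply_descSnoc_affine {K : (Fin (r + 1) → ℝ) → ℝ}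
    (hK : LocScaleInvariant K) {σ : ℝ} (hσ : 0 < σ) (z : Fin r → ℝ) (t : ℝ) :
    K (descSnoc (fun i => σ * z i + t) t) = Km K r z := by
  rw [descSnoc_affine hσ.le, hK σ t hσ, Km]

end Kernel

section IidSamples

variable {α ι κ : Type*} [MeasurableSpace α] [Fintype ι] [Fintype κ]

lemma measurePreserving_comp_equiv (μ : κ → Measure α) [∀ k, SigmaFinite (μ k)] (e : ι ≃ κ) :
    MeasurePreserving (fun x : κ → α => x ∘ e) (Measure.pi μ) (Measure.pi fun i => μ (e i)) :=
  (measurePreserving_piCongrLeft μ e).symm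

lemma measurePreserving_append (μ : Measure α) [SigmaFinite μ] (m n : ℕ) :
    MeasurePreserving (fun w : (Fin m → α) × (Fin n → α) => Fin.append w.1 w.2)
      ((Measure.pi fun _ => μ).prod (Measure.pi fun _ => μ)) (Measure.pi fun _ => μ) := by
  have h := (measurePreserving_comp_equiv (fun _ : Fin m ⊕ Fin n => μ) finSumFinEquiv.symm).comp
    (measurePreserving_sumPiEquivProdPi_symm fun _ : Fin m ⊕ Fin n => μ)
  convert h using 2 with w
  funext i
  refine Fin.addCases (fun i => ?_) (fun i => ?_) i <;> simp [MeasurableEquiv.sumPiEquivProdPi]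

lemma ae_injective_pi [MeasurableEq α] (μ : ι → Measure α) [∀ i, IsProbabilityMeasure (μ i)]
    [∀ i, NullSingletonClass (μ i)] : ∀ᵐ x ∂Measure.pi μ, Function.Injective x := by
  have hne {i j : ι} (hij : i ≠ j) : ∀ᵐ x ∂Measure.pi μ, x i ≠ x j := by
    have hpair : HasLaw (fun x : ι → α => (x i, x j)) ((μ i).prod (μ j)) (Measure.pi μ) :=
      ((iIndepFun_pi (X := fun _ => id) fun _ => aemeasurable_id).indepFun hij).hasLaw_prod
        (measurePreserving_eval μ i).hasLaw (measurePreserving_eval μ j).hasLaw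
    have hdiag : ∀ᵐ w ∂(μ i).prod (μ j), w.1 ≠ w.2 := by
      refine (Measure.ae_prod_iff_ae_ae measurableSet_diagonal.compl).2 (ae_of_all _ fun a => ?_)
      exact (measure_eq_zero_iff_ae_notMem.1 (measure_singleton a)).mono fun b hb h => hb h.symm
    rw [← hpair.map_eq] at hdiag
    exact ae_of_ae_map hpair.aemeasurable hdiag
  have hall : ∀ᵐ x ∂Measure.pi μ, ∀ i j, i ≠ j → x i ≠ x j := by
    simp only [ae_all_iff]
    exact fun _ _ => hne
  filter_upwards [hall] with x hx i j
  exact not_imp_not.1 (hx i j)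

lemma restrict_pi_of_restrict_eq_smul_map {μ : Measure α} [IsFiniteMeasure μ] {s : Set α}
    {f : α → α} (hf : Measurable f) (h : μ.restrict s = μ s • μ.map f) :
    (Measure.pi fun _ : ι => μ).restrict (univ.pi fun _ => s) =
      μ s ^ Fintype.card ι • (Measure.pi fun _ : ι => μ).map (f ∘ ·) := by
  rw [Measure.restrict_pi_pi]
  refine Measure.pi_eq fun t _ => ?_
  have hmap : (Measure.pi fun _ : ι => μ).map (f ∘ ·) = Measure.pi fun _ : ι => μ.map f :=
    Measure.pi_map_pi fun _ => hf.aemeasurable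
  simp only [hmap, h, Measure.smul_apply, Measure.pi_pi, smul_eq_mul, Finset.prod_mul_distrib,
    Finset.prod_const, Finset.card_univ]

end IidSamples

lemma iUnion_strictMono_comp_perm {α : Type*} [LinearOrder α] {n : ℕ} :
    ⋃ σ : Equiv.Perm (Fin n), {x : Fin n → α | StrictMono (x ∘ σ)} =
      {x | Function.Injective x} := by
  ext x
  simp only [mem_iUnion, mem_ofPred_eq]
  constructor
  · rintro ⟨σ, hσ⟩
    exact (σ.injective_comp x).1 hσ.injective
  · intro hx
    exact ⟨Tuple.sort x, (Tuple.monotone_sort x).strictMono_of_injective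
      (hx.comp (Tuple.sort x).injective)⟩

lemma pairwise_disjoint_strictMono_comp_perm {α : Type*} [LinearOrder α] {n : ℕ} :
    Pairwise (Function.onFun Disjoint fun σ : Equiv.Perm (Fin n) =>
      {x : Fin n → α | StrictMono (x ∘ σ)}) := by
  intro σ τ hστ
  refine Set.disjoint_left.2 fun x hσ hτ => hστ (Equiv.ext fun i => ?_)
  have hinj : Function.Injective x := (σ.injective_comp x).1 hσ.injective
  exact hinj (congrFun (Tuple.unique_monotone hσ.monotone hτ.monotone) i)

lemma pi_eq_factorial_mul_inter_strictMono {α : Type*} [LinearOrder α] [TopologicalSpace α]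
    [OrderClosedTopology α] [SecondCountableTopology α] [MeasurableSpace α]
    [OpensMeasurableSpace α] (μ : Measure α) [IsProbabilityMeasure μ] [NullSingletonClass μ]
    {n : ℕ} {s : Set (Fin n → α)} (hs : MeasurableSet s)
    (hperm : ∀ (σ : Equiv.Perm (Fin n)) x, x ∘ σ ∈ s ↔ x ∈ s) :
    (Measure.pi fun _ => μ) s =
      n.factorial * (Measure.pi fun _ => μ) (s ∩ {x | StrictMono x}) := by
  set ρ : Measure (Fin n → α) := Measure.pi fun _ => μ
  have hpres (σ : Equiv.Perm (Fin n)) : MeasurePreserving (fun x => x ∘ σ) ρ ρ :=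
    measurePreserving_comp_equiv (fun _ => μ) σ
  have hcone : MeasurableSet {x : Fin n → α | StrictMono x} := measurableSet_strictMono
  have hchamber (σ : Equiv.Perm (Fin n)) :
      ρ (s ∩ {x | StrictMono (x ∘ σ)}) = ρ (s ∩ {x | StrictMono x}) := by
    rw [← (hpres σ).measure_preimage (hs.inter hcone).nullMeasurableSet]
    exact congrArg ρ (ext fun x => and_congr_left' (hperm σ x).symm)
  have hinj : {x : Fin n → α | Function.Injective x} ∈ ae ρ := ae_injective_pi fun _ => μ
  calc ρ s = ρ (s ∩ {x | Function.Injective x}) := (measure_inter_conull hinj).symm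
    _ = ρ (⋃ σ : Equiv.Perm (Fin n), s ∩ {x | StrictMono (x ∘ σ)}) := by
      rw [← iUnion_strictMono_comp_perm, inter_iUnion]
    _ = ∑ σ : Equiv.Perm (Fin n), ρ (s ∩ {x | StrictMono (x ∘ σ)}) := by
      rw [← tsum_fintype (L := .unconditional _)]
      exact measure_iUnion (fun σ τ hστ => (pairwise_disjoint_strictMono_comp_perm hστ).mono
        inter_subset_right inter_subset_right) fun σ => hs.inter ((hpres σ).measurable hcone)
    _ = n.factorial * ρ (s ∩ {x | StrictMono x}) := by
      simp only [hchamber, Finset.sum_const, Finset.card_univ, Fintype.card_perm,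
        Fintype.card_fin, nsmul_eq_mul]

section ThresholdStable

/-- Peaks-over-threshold stability: for almost every threshold `t`, a variable with law `μ`
conditioned to exceed `t` is an increasing affine image of one with law `μ`. The identity is
written without dividing by `μ (Ioi t)`, so that it is harmless where `μ (Ioi t) = 0`. The location
of the affine map is taken to be `t` itself, as for generalized Pareto laws. -/
def IsThresholdStable (μ : Measure ℝ) : Prop :=
  ∀ᵐ t ∂μ, ∃ σ > 0, μ.restrict (Ioi t) = μ (Ioi t) • μ.map fun z => σ * z + t

variable {p r : ℕ} {μ : Measure ℝ} [IsProbabilityMeasure μ] {K : (Fin (r + 1) → ℝ) → ℝ}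

lemma pi_descSnoc_inter_pi_Ioi (hKm : Measurable K) (hK : LocScaleInvariant K)
    {σ t : ℝ} (hσ : 0 < σ)
    (ht : μ.restrict (Ioi t) = μ (Ioi t) • μ.map fun z => σ * z + t)
    {B : Set ℝ} (hB : MeasurableSet B) :
    (Measure.pi fun _ => μ)
        ({z : Fin r → ℝ | K (descSnoc z t) ∈ B ∧ StrictMono z} ∩ univ.pi fun _ => Ioi t) =
      μ (Ioi t) ^ r * (Measure.pi fun _ => μ) {z : Fin r → ℝ | Km K r z ∈ B ∧ StrictMono z} := by
  have hmeas : MeasurableSet {z : Fin r → ℝ | K (descSnoc z t) ∈ B ∧ StrictMono z} :=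
    (hKm.comp (measurable_descSnoc t) hB).inter measurableSet_strictMono
  rw [← Measure.restrict_apply hmeas, restrict_pi_of_restrict_eq_smul_map (by fun_prop) ht,
    Measure.smul_apply, Measure.map_apply (by fun_prop) hmeas, smul_eq_mul, Fintype.card_fin]
  congr 2
  ext z
  simp only [mem_preimage, mem_ofPred_eq, strictMono_affine_iff hσ, Function.comp_def,
    hK.apply_descSnoc_affine hσ]

lemma pi_section_append (hKm : Measurable K) (hK : LocScaleInvariant K) {y : Fin (p + 1) → ℝ}
    {σ : ℝ} (hσ : 0 < σ) (hy : μ.restrict (Ioi (y (Fin.last p))) =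
      μ (Ioi (y (Fin.last p))) • μ.map fun z => σ * z + y (Fin.last p))
    (A : Set ℝ) {B : Set ℝ} (hB : MeasurableSet B) :
    (Measure.pi fun _ => μ) {z : Fin r → ℝ | (descStat (Fin.append y z) r ∈ A ∧
        Km K (p + 1 + r) (Fin.append y z) ∈ B) ∧ StrictMono (Fin.append y z)} =
      {y : Fin (p + 1) → ℝ | StrictMono y ∧ y (Fin.last p) ∈ A}.indicator
        (fun y => μ (Ioi (y (Fin.last p))) ^ r) y *
        (Measure.pi fun _ => μ) {z : Fin r → ℝ | Km K r z ∈ B ∧ StrictMono z} := by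
  set t := y (Fin.last p)
  have hsection (z : Fin r → ℝ) : ((descStat (Fin.append y z) r ∈ A ∧
      Km K (p + 1 + r) (Fin.append y z) ∈ B) ∧ StrictMono (Fin.append y z)) ↔
      (StrictMono y ∧ t ∈ A) ∧ (K (descSnoc z t) ∈ B ∧ StrictMono z) ∧ ∀ j, t < z j := by
    have hstat (h : StrictMono (Fin.append y z)) : (descStat (Fin.append y z) r ∈ A ∧
        Km K (p + 1 + r) (Fin.append y z) ∈ B) ↔ t ∈ A ∧ K (descSnoc z t) ∈ B := by
      rw [descStat_append_self h, Km_append K h]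
    rw [and_congr_left hstat, strictMono_append_iff]
    tauto
  by_cases hyA : StrictMono y ∧ t ∈ A
  · rw [indicator_of_mem (by exact hyA), ← pi_descSnoc_inter_pi_Ioi hKm hK hσ hy hB]
    congr 1
    ext z
    simp only [mem_ofPred_eq, hsection, hyA, true_and, and_self, mem_inter_iff, mem_univ_pi,
      mem_Ioi]
  · rw [indicator_of_notMem (by exact hyA), zero_mul]
    simp only [hsection, hyA, false_and, ofPred_false, measure_empty]

lemma IsThresholdStable.pi_inter_strictMono (hμ : IsThresholdStable μ) (p : ℕ) (hKm : Measurable K)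
    (hK : LocScaleInvariant K) {A B : Set ℝ} (hA : MeasurableSet A) (hB : MeasurableSet B) :
    (Measure.pi fun _ => μ) ({x : Fin (p + 1 + r) → ℝ |
        descStat x r ∈ A ∧ Km K (p + 1 + r) x ∈ B} ∩ {x | StrictMono x}) =
      (∫⁻ y in {y : Fin (p + 1) → ℝ | StrictMono y ∧ y (Fin.last p) ∈ A},
        μ (Ioi (y (Fin.last p))) ^ r ∂Measure.pi fun _ => μ) *
      (Measure.pi fun _ => μ) {z : Fin r → ℝ | Km K r z ∈ B ∧ StrictMono z} := by
  have hset := (measurableSet_descStat_Km (p + 1 + r) r hKm hA hB).inter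
    (measurableSet_strictMono (α := ℝ))
  have hdom : MeasurableSet {y : Fin (p + 1) → ℝ | StrictMono y ∧ y (Fin.last p) ∈ A} :=
    measurableSet_strictMono.inter (measurable_pi_apply _ hA)
  have hanti : Antitone fun t => μ (Ioi t) := fun _ _ hst => measure_mono (Ioi_subset_Ioi hst)
  have htail : Measurable fun y : Fin (p + 1) → ℝ => μ (Ioi (y (Fin.last p))) ^ r :=
    (hanti.measurable.comp (measurable_pi_apply _)).pow_const r
  have hlast : ∀ᵐ y ∂Measure.pi fun _ : Fin (p + 1) => μ, ∃ σ > 0,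
      μ.restrict (Ioi (y (Fin.last p))) =
        μ (Ioi (y (Fin.last p))) • μ.map fun z => σ * z + y (Fin.last p) :=
    (Measure.quasiMeasurePreserving_eval (fun _ => μ) (Fin.last p)).ae hμ
  have happend := measurePreserving_append μ (p + 1) r
  rw [← happend.measure_preimage hset.nullMeasurableSet,
    Measure.prod_apply (happend.measurable hset), ← lintegral_indicator hdom,
    ← lintegral_mul_const _ (htail.indicator hdom)]
  refine lintegral_congr_ae ?_
  filter_upwards [hlast] with y ⟨σ, hσ, hy⟩
  exact pi_section_append hKm hK hσ hy A hB

variable (μ) [NullSingletonClass μ] in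
lemma pi_Km_mem (hKm : Measurable K) {B : Set ℝ} (hB : MeasurableSet B) (n : ℕ) :
    (Measure.pi fun _ => μ) {z : Fin n → ℝ | Km K n z ∈ B} =
      n.factorial * (Measure.pi fun _ => μ) {z : Fin n → ℝ | Km K n z ∈ B ∧ StrictMono z} :=
  pi_eq_factorial_mul_inter_strictMono μ (measurable_Km hKm hB) fun σ x => by
    simp only [mem_ofPred_eq, Km_comp_perm]

variable [NullSingletonClass μ]

lemma IsThresholdStable.pi_descStat_Km (hμ : IsThresholdStable μ) (p : ℕ) (hKm : Measurable K)
    (hK : LocScaleInvariant K) {A B : Set ℝ} (hA : MeasurableSet A) (hB : MeasurableSet B) :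
    (Measure.pi fun _ => μ) {x : Fin (p + 1 + r) → ℝ |
        descStat x r ∈ A ∧ Km K (p + 1 + r) x ∈ B} =
      (Measure.pi fun _ => μ) {x : Fin (p + 1 + r) → ℝ | descStat x r ∈ A} *
        (Measure.pi fun _ => μ) {z : Fin r → ℝ | Km K r z ∈ B} := by
  set J := ∫⁻ y in {y : Fin (p + 1) → ℝ | StrictMono y ∧ y (Fin.last p) ∈ A},
    μ (Ioi (y (Fin.last p))) ^ r ∂Measure.pi fun _ => μ
  set κ : Set ℝ → ℝ≥0∞ := fun C =>
    (Measure.pi fun _ => μ) {z : Fin r → ℝ | Km K r z ∈ C ∧ StrictMono z}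
  have hjoint {C : Set ℝ} (hC : MeasurableSet C) : (Measure.pi fun _ => μ)
      {x : Fin (p + 1 + r) → ℝ | descStat x r ∈ A ∧ Km K (p + 1 + r) x ∈ C} =
      (p + 1 + r).factorial * (J * κ C) := by
    rw [← hμ.pi_inter_strictMono p hKm hK hA hC]
    refine pi_eq_factorial_mul_inter_strictMono μ
      (measurableSet_descStat_Km _ r hKm hA hC) fun σ x => ?_
    simp only [mem_ofPred_eq, descStat_comp_perm, Km_comp_perm]
  -- The event `C = univ` expresses the constants `J` and `κ univ` through probabilities.
  have hmarginal := hjoint MeasurableSet.univ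
  simp only [mem_univ, and_true] at hmarginal
  have hone : r.factorial * κ univ = 1 :=
    (pi_Km_mem μ hKm MeasurableSet.univ r).symm.trans
      (by simp only [mem_univ, ofPred_true, measure_univ])
  rw [hjoint hB, hmarginal, pi_Km_mem μ hKm hB r]
  calc (p + 1 + r).factorial * (J * κ B)
      = (p + 1 + r).factorial * (J * κ B) * (r.factorial * κ univ) := by rw [hone, mul_one]
    _ = (p + 1 + r).factorial * (J * κ univ) * (r.factorial * κ B) := by ring

lemma IsThresholdStable.map_descStat_Km (hμ : IsThresholdStable μ) (p : ℕ) (hKm : Measurable K)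
    (hK : LocScaleInvariant K) :
    (Measure.pi fun _ : Fin (p + 1 + r) => μ).map (fun x => (descStat x r, Km K (p + 1 + r) x)) =
      ((Measure.pi fun _ : Fin (p + 1 + r) => μ).map fun x => descStat x r).prod
        ((Measure.pi fun _ : Fin r => μ).map (Km K r)) := by
  have hD : Measurable fun x : Fin (p + 1 + r) → ℝ => descStat x r := measurable_descStat r
  have := Measure.isProbabilityMeasure_map (μ := Measure.pi fun _ => μ) hD.aemeasurable
  have := Measure.isProbabilityMeasure_map (μ := Measure.pi fun _ => μ)
    (measurable_Km (n := r) hKm).aemeasurable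
  refine (Measure.prod_eq fun A B hA hB => ?_).symm
  rw [Measure.map_apply (hD.prodMk (measurable_Km hKm)) (hA.prod hB), Measure.map_apply hD hA,
    Measure.map_apply (measurable_Km hKm) hB]
  exact hμ.pi_descStat_Km p hKm hK hA hB

end ThresholdStable

section Pareto

lemma ae_le_paretoMeasure (t r : ℝ) : ∀ᵐ x ∂paretoMeasure t r, t ≤ x := by
  refine (ae_withDensity_iff (measurable_paretoPDFReal t r).ennreal_ofReal).2
    (ae_of_all _ fun x hx => ?_)
  by_contra! h
  exact hx (paretoPDF_of_lt h)

instance nullSingletonClass_paretoMeasure (t r : ℝ) : NullSingletonClass (paretoMeasure t r) := by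
  unfold paretoMeasure
  infer_instance

lemma paretoMeasure_Ici_of_le {t r b : ℝ} (ht : 0 < t) (hr : 0 < r) (hb : t ≤ b) :
    paretoMeasure t r (Ici b) = ENNReal.ofReal ((t / b) ^ r) := by
  have hb0 : 0 < b := ht.trans_le hb
  have hint : ∫ x in Ioi b, r * t ^ r * x ^ (-(r + 1)) = (t / b) ^ r := by
    rw [integral_const_mul, integral_Ioi_rpow_of_lt (by linarith) hb0, div_rpow ht.le hb0.le,
      show -(r + 1) + 1 = -r by ring, rpow_neg hb0.le]
    field_simp
  calc paretoMeasure t r (Ici b) = ∫⁻ x in Ici b, paretoPDF t r x :=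
        withDensity_apply _ measurableSet_Ici
    _ = ∫⁻ x in Ici b, ENNReal.ofReal (r * t ^ r * x ^ (-(r + 1))) :=
        setLIntegral_congr_fun measurableSet_Ici fun x hx => paretoPDF_of_le (hb.trans hx)
    _ = ∫⁻ x in Ioi b, ENNReal.ofReal (r * t ^ r * x ^ (-(r + 1))) :=
        setLIntegral_congr Ioi_ae_eq_Ici.symm
    _ = ENNReal.ofReal (∫ x in Ioi b, r * t ^ r * x ^ (-(r + 1))) := by
        refine (ofReal_integral_eq_lintegral_ofReal
          ((integrableOn_Ioi_rpow_of_lt (by linarith) hb0).const_mul _) ?_).symm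
        filter_upwards [ae_restrict_mem measurableSet_Ioi] with x hx
        have hx0 : 0 < x := hb0.trans hx
        positivity
    _ = ENNReal.ofReal ((t / b) ^ r) := by rw [hint]

lemma paretoMeasure_Ici {t r : ℝ} (ht : 0 < t) (hr : 0 < r) (a : ℝ) :
    paretoMeasure t r (Ici a) = ENNReal.ofReal ((t / max a t) ^ r) := by
  have hIci : {x | t ≤ x} ∈ ae (paretoMeasure t r) := ae_le_paretoMeasure t r
  rw [← paretoMeasure_Ici_of_le ht hr (le_max_right a t), ← Ici_inter_Ici]
  exact (measure_inter_conull hIci).symm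

lemma paretoMeasure_restrict_Ioi {t r s : ℝ} (ht : 0 < t) (hr : 0 < r) (hs : 1 ≤ s) :
    (paretoMeasure t r).restrict (Ioi (s * t)) =
      paretoMeasure t r (Ioi (s * t)) • (paretoMeasure t r).map (s * ·) := by
  have hs0 : 0 < s := one_pos.trans_le hs
  have hts : t ≤ s * t := le_mul_of_one_le_left ht.le hs
  have := isProbabilityMeasure_paretoMeasure ht hr
  have := Measure.isProbabilityMeasure_map (μ := paretoMeasure t r)
    (measurable_const_mul s).aemeasurable
  have := Measure.smul_finite ((paretoMeasure t r).map (s * ·))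
    (measure_ne_top (paretoMeasure t r) (Ioi (s * t)))
  refine Measure.ext_of_Ici _ _ fun a => ?_
  have hpre : (s * ·) ⁻¹' Ici a = Ici (a / s) := by
    ext x
    simp only [mem_preimage, mem_Ici, div_le_iff₀' hs0]
  have hmax : max (max a (s * t)) t = s * max (a / s) t := by
    rw [max_assoc, max_eq_left hts, mul_max_of_nonneg _ _ hs0.le, mul_div_cancel₀ _ hs0.ne']
  calc (paretoMeasure t r).restrict (Ioi (s * t)) (Ici a)
      = paretoMeasure t r (Ici (max a (s * t))) := by
        rw [restrict_Ioi_eq_restrict_Ici, Measure.restrict_apply measurableSet_Ici, Ici_inter_Ici]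
    _ = ENNReal.ofReal ((t / (s * t)) ^ r * (t / max (a / s) t) ^ r) := by
        rw [paretoMeasure_Ici ht hr, hmax, ← mul_rpow (by positivity) (by positivity)]
        congr 2
        field_simp
    _ = paretoMeasure t r (Ici (s * t)) * paretoMeasure t r (Ici (a / s)) := by
        rw [paretoMeasure_Ici_of_le ht hr hts, paretoMeasure_Ici ht hr,
          ENNReal.ofReal_mul (by positivity)]
    _ = (paretoMeasure t r (Ioi (s * t)) • (paretoMeasure t r).map (s * ·)) (Ici a) := by
        rw [Measure.smul_apply, smul_eq_mul, measure_congr Ioi_ae_eq_Ici,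
          Measure.map_apply (measurable_const_mul s) measurableSet_Ici, hpre]

end Pareto

lemma nullSingletonClass_map_of_injOn {α β : Type*} [MeasurableSpace α] [MeasurableSpace β]
    [MeasurableSingletonClass β] {μ : Measure α} [NullSingletonClass μ] {f : α → β}
    (hf : Measurable f) {s : Set α} (hs : ∀ᵐ x ∂μ, x ∈ s) (hinj : InjOn f s) :
    NullSingletonClass (μ.map f) where
  measure_singleton b := by
    rw [Measure.map_apply hf (measurableSet_singleton b), ← measure_inter_conull (t := s) hs]
    exact Set.Subsingleton.measure_zero
      (fun x hx y hy => hinj hx.2 hy.2 (hx.1.trans hy.1.symm)) μ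

section GeneralizedPareto

variable (γ : ℝ)

lemma hGamma_mul {s y : ℝ} (hs : 0 < s) (hy : 0 < y) :
    hGamma γ (s * y) = s ^ γ * hGamma γ y + hGamma γ s := by
  unfold hGamma
  split_ifs with hγ
  · rw [hγ, log_mul hs.ne' hy.ne', rpow_zero, one_mul, add_comm]
  · rw [mul_rpow hs.le hy.le]
    ring

lemma hGamma_strictMonoOn : StrictMonoOn (hGamma γ) (Ioi 0) := by
  intro x hx y _ hxy
  unfold hGamma
  split_ifs with hγ
  · exact log_lt_log hx hxy
  rcases lt_or_gt_of_ne hγ with hγ | hγ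
  · exact div_lt_div_of_neg_of_lt hγ (sub_lt_sub_right (rpow_lt_rpow_of_neg hx hxy hγ) 1)
  · exact div_lt_div_of_pos_right
      (sub_lt_sub_right (rpow_lt_rpow (mem_Ioi.1 hx).le hxy hγ) 1) hγ

lemma hGamma_strictMonoOn_Ici : StrictMonoOn (hGamma γ) (Ici 1) :=
  (hGamma_strictMonoOn γ).mono (Ici_subset_Ioi.2 one_pos)

instance nullSingletonClass_gpMeasure : NullSingletonClass (gpMeasure γ) :=
  have : NullSingletonClass pareto1 := nullSingletonClass_paretoMeasure 1 1
  nullSingletonClass_map_of_injOn (measurable_hGamma γ) (ae_le_paretoMeasure 1 1)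
    (hGamma_strictMonoOn_Ici γ).injOn

lemma gpMeasure_restrict_Ioi {s : ℝ} (hs : 1 ≤ s) :
    (gpMeasure γ).restrict (Ioi (hGamma γ s)) = gpMeasure γ (Ioi (hGamma γ s)) •
      (gpMeasure γ).map fun z => s ^ γ * z + hGamma γ s := by
  have hγ : Measurable (hGamma γ) := measurable_hGamma γ
  have hpareto : pareto1.restrict (Ioi s) = pareto1 (Ioi s) • pareto1.map (s * ·) := by
    simpa only [pareto1, mul_one] using paretoMeasure_restrict_Ioi one_pos one_pos hs
  have hpre : hGamma γ ⁻¹' Ioi (hGamma γ s) =ᵐ[pareto1] Ioi s := by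
    filter_upwards [ae_le_paretoMeasure 1 1] with y hy
    exact propext ((hGamma_strictMonoOn_Ici γ).lt_iff_lt hs hy)
  have hmul : hGamma γ ∘ (s * ·) =ᵐ[pareto1] (fun z => s ^ γ * z + hGamma γ s) ∘ hGamma γ := by
    filter_upwards [ae_le_paretoMeasure 1 1] with y hy
    exact hGamma_mul γ (one_pos.trans_le hs) (one_pos.trans_le hy)
  calc (gpMeasure γ).restrict (Ioi (hGamma γ s))
      = (pareto1.restrict (Ioi s)).map (hGamma γ) := by
        rw [gpMeasure, Measure.restrict_map hγ measurableSet_Ioi, Measure.restrict_congr_set hpre]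
    _ = pareto1 (Ioi s) • pareto1.map (hGamma γ ∘ (s * ·)) := by
        rw [hpareto, Measure.map_smul, Measure.map_map hγ (measurable_const_mul s)]
    _ = gpMeasure γ (Ioi (hGamma γ s)) • (gpMeasure γ).map fun z => s ^ γ * z + hGamma γ s := by
        rw [gpMeasure, Measure.map_apply hγ measurableSet_Ioi, measure_congr hpre,
          Measure.map_congr hmul, Measure.map_map (by fun_prop) hγ]

lemma isThresholdStable_gpMeasure : IsThresholdStable (gpMeasure γ) := by
  have himage : MeasurableSet (hGamma γ '' Ici 1) :=
    measurableSet_Ici.image_of_measurable_injOn (measurable_hGamma γ)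
      (hGamma_strictMonoOn_Ici γ).injOn
  have hrange : ∀ᵐ t ∂gpMeasure γ, t ∈ hGamma γ '' Ici 1 :=
    (ae_map_iff (measurable_hGamma γ).aemeasurable himage).2
      ((ae_le_paretoMeasure 1 1).mono fun s hs => mem_image_of_mem _ hs)
  filter_upwards [hrange]
  rintro _ ⟨s, hs, rfl⟩
  exact ⟨s ^ γ, rpow_pos_of_pos (one_pos.trans_le hs) γ, gpMeasure_restrict_Ioi γ hs⟩

end GeneralizedPareto

lemma hasLaw_sum_split {Ω α ι κ : Type*} [MeasurableSpace Ω] [MeasurableSpace α] [Fintype ι]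
    [Fintype κ] {P : Measure Ω} {μ : ι ⊕ κ → Measure α} [∀ i, SigmaFinite (μ i)]
    {W : ι ⊕ κ → Ω → α} (hW : ∀ i, HasLaw (W i) (μ i) P) (hindep : iIndepFun W P) :
    HasLaw (fun ω => (fun i => W (.inl i) ω, fun k => W (.inr k) ω))
      ((Measure.pi fun i => μ (.inl i)).prod (Measure.pi fun k => μ (.inr k))) P :=
  (measurePreserving_sumPiEquivProdPi μ).comp_hasLaw (hindep.hasLaw_pi hW)

theorem gp_kernel_representation_general {Ω : Type*} [MeasurableSpace Ω] {P : Measure Ω}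
    {μ : Measure ℝ} [IsProbabilityMeasure μ] [NullSingletonClass μ] (hμ : IsThresholdStable μ)
    {q m : ℕ} (hq : 0 < q) (hqm : q ≤ m) {K : (Fin q → ℝ) → ℝ} (hKm : Measurable K)
    (hK : LocScaleInvariant K) {W : Fin m ⊕ Fin (q - 1) → Ω → ℝ} (hindep : iIndepFun W P)
    (hW : ∀ i, HasLaw (W i) μ P) :
    Measure.map
      (fun ω => (descStat (fun a : Fin m => W (Sum.inl a) ω) (q - 1),
        Km K m (fun a : Fin m => W (Sum.inl a) ω))) P
    = Measure.map
      (fun ω => (descStat (fun a : Fin m => W (Sum.inl a) ω) (q - 1),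
        K (refVec (fun a : Fin (q - 1) => W (Sum.inr a) ω)))) P
    ∧ IndepFun
        (fun ω => descStat (fun a : Fin m => W (Sum.inl a) ω) (q - 1))
        (fun ω => Km K m (fun a : Fin m => W (Sum.inl a) ω)) P
    ∧ Measure.map (fun ω => Km K m (fun a : Fin m => W (Sum.inl a) ω)) P
        = Measure.map (fun ω => K (refVec (fun a : Fin (q - 1) => W (Sum.inr a) ω))) P := by
  obtain ⟨r, rfl⟩ : ∃ r, q = r + 1 := ⟨q - 1, by omega⟩
  obtain ⟨p, rfl⟩ : ∃ p, m = p + 1 + r := ⟨m - (r + 1), by omega⟩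
  have := hindep.isProbabilityMeasure
  have hD : Measurable fun x : Fin (p + 1 + r) → ℝ => descStat x r := measurable_descStat r
  have hR : Measurable (Km K r) := measurable_Km hKm
  have := Measure.isProbabilityMeasure_map (μ := Measure.pi fun _ => μ) hD.aemeasurable
  have := Measure.isProbabilityMeasure_map (μ := Measure.pi fun _ => μ) hR.aemeasurable
  have hsplit := hasLaw_sum_split hW hindep
  have hsample := measurePreserving_fst.comp_hasLaw hsplit
  have hreference := ((hD.measurePreserving _).prod (hR.measurePreserving _)).comp_hasLaw hsplit
  have hkernel := (MeasurePreserving.mk (hD.prodMk (measurable_Km hKm))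
    (hμ.map_descStat_Km p hKm hK)).comp_hasLaw hsample
  have hthreshold_law := measurePreserving_fst.comp_hasLaw hkernel
  have hkernel_law := measurePreserving_snd.comp_hasLaw hkernel
  exact ⟨hkernel.map_eq.trans hreference.map_eq.symm,
    (indepFun_iff_hasLaw_prodMk_prod hthreshold_law hkernel_law).2 hkernel,
    hkernel_law.map_eq.trans (measurePreserving_snd.comp_hasLaw hreference).map_eq.symm⟩

/-- Lemma: joint law of `(Z*_{m-q+1:m}, K_m(Z*_1,…,Z*_m))`.
For a location-scale invariant kernel `K` and independent standard `GP(γ)` variables,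
`(Z*_{m-q+1:m}, K_m(Z*)) =_d (Z*_{m-q+1:m}, K((Z_{q-i:q-1})_{i=1}^q))`; in particular
`K_m(Z*)` is independent of `Z*_{m-q+1:m}` and its law does not depend on `m`. -/
theorem gp_kernel_representation
    {Ω : Type*} [MeasurableSpace Ω] (P : Measure Ω) [IsProbabilityMeasure P]
    (γ : ℝ) (q m : ℕ) (hq : 3 ≤ q) (hqm : q ≤ m)
    (K : (Fin q → ℝ) → ℝ) (hKmeas : Measurable K)
    (hLS : LocScaleInvariant K)
    (W : (Fin m ⊕ Fin (q - 1)) → Ω → ℝ)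
    (hWmeas : ∀ i, Measurable (W i))
    (hIndep : iIndepFun W P)
    (hDist : ∀ i, Measure.map (W i) P = gpMeasure γ) :
    Measure.map
      (fun ω => (descStat (fun a : Fin m => W (Sum.inl a) ω) (q - 1),
        Km K m (fun a : Fin m => W (Sum.inl a) ω))) P
    = Measure.map
      (fun ω => (descStat (fun a : Fin m => W (Sum.inl a) ω) (q - 1),
        K (refVec (fun a : Fin (q - 1) => W (Sum.inr a) ω)))) P
    ∧ IndepFun
        (fun ω => descStat (fun a : Fin m => W (Sum.inl a) ω) (q - 1))
        (fun ω => Km K m (fun a : Fin m => W (Sum.inl a) ω)) P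
    ∧ Measure.map (fun ω => Km K m (fun a : Fin m => W (Sum.inl a) ω)) P
        = Measure.map (fun ω => K (refVec (fun a : Fin (q - 1) => W (Sum.inr a) ω))) P :=
  gp_kernel_representation_general (isThresholdStable_gpMeasure γ) (by omega) hqm hKmeas hLS hIndep
    fun i => ⟨(hWmeas i).aemeasurable, hDist i⟩

end
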